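/- Let ν be a measure on ℝⁿ satisfying the Lévy measure condition ∫ min(‖x‖², 1) ν(dx) < ∞ and Hypothesis 1: for some ε > 0 and λ > 0, ∫_{‖x‖ ≥ ε} exp(λ‖x‖) ν(dx) < ∞. Then for every multi-index p = (p₁, …, pₙ) ∈ ℕⁿ with total degree |p| = p₁ + ⋯ + pₙ ≥ 2, the monomial function x ↦ x₁^{p₁} ⋯ xₙ^{pₙ} is ν-integrable, i.e. ∫ |x₁^{p₁} ⋯ xₙ^{pₙ}| ν(dx) < ∞. -/

import Mathlib

/-!
A monomial of degree `k` is dominated by `‖x‖ ^ k`. Split the space at the radius `ε` of the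
exponential moment. On `‖x‖ < ε`, a constant multiple of `min (‖x‖ ^ 2) 1` dominates `‖x‖ ^ k`
because `2 ≤ k`; on `ε ≤ ‖x‖`, a constant multiple of `exp (lam * ‖x‖)` does.
-/

open MeasureTheory

lemma pow_le_max_one_pow_mul_min_pow_one {α : Type*} [Semiring α] [LinearOrder α]
    [IsStrictOrderedRing α] {r R : α} {m k : ℕ} (hr : 0 ≤ r) (hrR : r ≤ R) (hmk : m ≤ k) :
    r ^ k ≤ max 1 (R ^ k) * min (r ^ m) 1 := by
  rcases le_total r 1 with hr1 | hr1
  · calc r ^ k ≤ r ^ m := pow_le_pow_of_le_one hr hr1 hmk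
      _ ≤ max 1 (R ^ k) * r ^ m := le_mul_of_one_le_left (pow_nonneg hr m) (le_max_left _ _)
      _ = max 1 (R ^ k) * min (r ^ m) 1 := by rw [min_eq_left (pow_le_one₀ hr hr1)]
  · calc r ^ k ≤ R ^ k := pow_le_pow_left₀ hr hrR k
      _ ≤ max 1 (R ^ k) := le_max_right _ _
      _ = max 1 (R ^ k) * min (r ^ m) 1 := by rw [min_eq_right (one_le_pow₀ hr1), mul_one]

section Truncation

variable {Ω : Type*} [MeasurableSpace Ω] {μ : Measure Ω} {X : Ω → ℝ}

lemma integrable_pow_of_integrable_exp_mul_of_nonneg {t : ℝ} (ht : 0 < t) (hX : 0 ≤ᵐ[μ] X)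
    (hexp : Integrable (fun ω => Real.exp (t * X ω)) μ) (k : ℕ) :
    Integrable (fun ω => X ω ^ k) μ := by
  have hXm : AEMeasurable X μ :=
    Real.aemeasurable_of_aemeasurable_exp_mul ht.ne' hexp.aemeasurable
  have hexp_neg : Integrable (fun ω => Real.exp (-t * X ω)) μ := by
    refine hexp.mono' (by fun_prop) ?_
    filter_upwards [hX] with ω (hω : 0 ≤ X ω)
    rw [Real.norm_of_nonneg (Real.exp_nonneg _)]
    gcongr
    linarith
  exact ProbabilityTheory.integrable_pow_of_integrable_exp_mul ht.ne' hexp hexp_neg k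

lemma integrable_pow_of_integrable_min_pow_one_of_ae_le {R : ℝ} {m k : ℕ} (hXm : AEMeasurable X μ)
    (hX : 0 ≤ᵐ[μ] X) (hXR : ∀ᵐ ω ∂μ, X ω ≤ R) (hmk : m ≤ k)
    (hmin : Integrable (fun ω => min (X ω ^ m) 1) μ) :
    Integrable (fun ω => X ω ^ k) μ := by
  refine (hmin.const_mul (max 1 (R ^ k))).mono' (by fun_prop) ?_
  filter_upwards [hX, hXR] with ω (hω : 0 ≤ X ω) hωR
  rw [Real.norm_of_nonneg (pow_nonneg hω k)]
  exact pow_le_max_one_pow_mul_min_pow_one hω hωR hmk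

lemma integrable_pow_of_integrable_min_pow_one_of_integrableOn_exp_mul {R t : ℝ} {m k : ℕ}
    (hXm : AEMeasurable X μ) (hX : 0 ≤ᵐ[μ] X) (ht : 0 < t) (hmk : m ≤ k)
    (hmin : Integrable (fun ω => min (X ω ^ m) 1) μ)
    (hexp : IntegrableOn (fun ω => Real.exp (t * X ω)) {ω | R ≤ X ω} μ) :
    Integrable (fun ω => X ω ^ k) μ := by
  have hlarge : IntegrableOn (fun ω => X ω ^ k) {ω | R ≤ X ω} μ :=
    integrable_pow_of_integrable_exp_mul_of_nonneg ht (ae_restrict_of_ae hX) hexp k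
  have hle : ∀ᵐ ω ∂μ.restrict {ω | R ≤ X ω}ᶜ, X ω ≤ R := by
    filter_upwards [ae_restrict_mem₀ (nullMeasurableSet_le aemeasurable_const hXm).compl]
      with ω (hω : ¬R ≤ X ω)
    exact (not_le.mp hω).le
  have hsmall : IntegrableOn (fun ω => X ω ^ k) {ω | R ≤ X ω}ᶜ μ :=
    integrable_pow_of_integrable_min_pow_one_of_ae_le hXm.restrict (ae_restrict_of_ae hX) hle
      hmk hmin.integrableOn
  rw [← integrableOn_univ, ← Set.union_compl_self {ω | R ≤ X ω}]
  exact hlarge.union hsmall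

end Truncation

lemma norm_prod_pow_apply_le_norm_pow {ι 𝕜 : Type*} [Fintype ι] [NormedField 𝕜]
    {q : ENNReal} [Fact (1 ≤ q)] (x : PiLp q fun _ : ι => 𝕜) (p : ι → ℕ) :
    ‖∏ i, x i ^ p i‖ ≤ ‖x‖ ^ ∑ i, p i := by
  rw [norm_prod, ← Finset.prod_pow_eq_pow_sum]
  gcongr with i
  rw [norm_pow]
  gcongr
  exact PiLp.norm_apply_le x i

theorem monomial_integrable_of_levy_measure_general {ι 𝕜 : Type*} [Fintype ι] [RCLike 𝕜]
    {q : ENNReal} [Fact (1 ≤ q)] {ν : Measure (PiLp q fun _ : ι => 𝕜)} {m : ℕ} {ε lam : ℝ}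
    (hmin : ∫⁻ x, ENNReal.ofReal (min (‖x‖ ^ m) 1) ∂ν < ⊤) (hlam : 0 < lam)
    (hexp : ∫⁻ x in {x | ε ≤ ‖x‖}, ENNReal.ofReal (Real.exp (lam * ‖x‖)) ∂ν < ⊤)
    {p : ι → ℕ} (hp : m ≤ ∑ i, p i) :
    Integrable (fun x : PiLp q fun _ : ι => 𝕜 => ∏ i, x i ^ p i) ν := by
  have hmin_int : Integrable (fun x => min (‖x‖ ^ m) 1) ν :=
    (lintegral_ofReal_ne_top_iff_integrable (by fun_prop)
      (ae_of_all _ fun x => by positivity)).mp hmin.ne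
  have hexp_int : IntegrableOn (fun x => Real.exp (lam * ‖x‖)) {x | ε ≤ ‖x‖} ν :=
    (lintegral_ofReal_ne_top_iff_integrable (by fun_prop)
      (ae_of_all _ fun x => Real.exp_nonneg _)).mp hexp.ne
  have hnorm : Integrable (fun x => ‖x‖ ^ ∑ i, p i) ν :=
    integrable_pow_of_integrable_min_pow_one_of_integrableOn_exp_mul measurable_norm.aemeasurable
      (ae_of_all _ norm_nonneg) hlam hp hmin_int hexp_int
  exact hnorm.mono' (by fun_prop) (ae_of_all _ fun x => norm_prod_pow_apply_le_norm_pow x p)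

/-- If a Lévy measure `ν` on `ℝⁿ` satisfies `∫ min(‖x‖², 1) ν(dx) < ∞` and Hypothesis 1
(`∫_{‖x‖ ≥ ε} exp(λ‖x‖) ν(dx) < ∞` for some `ε, λ > 0`), then every monomial of total
degree at least `2` is `ν`-integrable. -/
theorem monomial_integrable_of_levy_measure (n : ℕ)
    (ν : Measure (EuclideanSpace ℝ (Fin n))) [SigmaFinite ν]
    (hLevy : ∫⁻ x, ENNReal.ofReal (min (‖x‖ ^ 2) 1) ∂ν < ⊤)
    (hHyp : ∃ ε > (0 : ℝ), ∃ lam > (0 : ℝ),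
      ∫⁻ x in {x | ε ≤ ‖x‖}, ENNReal.ofReal (Real.exp (lam * ‖x‖)) ∂ν < ⊤)
    (p : Fin n → ℕ) (hp : 2 ≤ ∑ i, p i) :
    Integrable (fun x : EuclideanSpace ℝ (Fin n) => ∏ i, (x i) ^ (p i)) ν := by
  obtain ⟨ε, -, lam, hlam, hexp⟩ := hHyp
  exact monomial_integrable_of_levy_measure_general hLevy hlam hexp hp
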